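/- Let p be a probability mass function on the positive integers with p(1) ≥ p(2) ≥ ⋯ (nonincreasing) and p(1) < 1. For each x with p(x) > 0, let α_x be the smallest integer satisfying 2^{-α_x} ≤ p(x). Then there exists a positive integer x_0 such that p(x) > 0 for all x ≤ x_0 and ∑_{x=1}^{x_0} 2^{-α_x} = 1/2. -/

import Mathlib

/-!
Write `q x = 2 ^ (-α x)` for the power of two obtained by rounding `p x` down. Since `p < 2 * q`
where `p` is positive, the total mass of `q` exceeds `1/2`, so the partial sums of `q` reach `1/2`.
They cannot jump over it: as `p` is nonincreasing and below `1`, both `1/2` and all earlier terms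
are integer multiples of `q n`, so a partial sum below `1/2` stays below it by at least the next
term.
-/

open AddSubgroup

section OrderedAddCommGroup

variable {G : Type*} [AddCommGroup G] [LinearOrder G] [IsOrderedAddMonoid G]

theorem add_le_of_lt_of_mem_zmultiples {g x y : G} (hg : 0 < g) (hx : x ∈ zmultiples g)
    (hy : y ∈ zmultiples g) (hxy : x < y) : x + g ≤ y := by
  obtain ⟨m, rfl⟩ := mem_zmultiples_iff.1 hx
  obtain ⟨n, rfl⟩ := mem_zmultiples_iff.1 hy
  rw [← add_one_zsmul]
  exact zsmul_le_zsmul_left hg.le ((zsmul_lt_zsmul_iff_left hg).1 hxy)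

theorem exists_sum_range_succ_eq_of_mem_zmultiples {u : ℕ → G} {t : G} (ht : 0 < t)
    (hu : ∀ n, 0 ≤ u n) (hut : ∀ n, 0 < u n → t ∈ zmultiples (u n))
    (huu : ∀ n, 0 < u n → ∀ m < n, u m ∈ zmultiples (u n))
    (hle : ∃ N, t ≤ ∑ i ∈ Finset.range N, u i) :
    ∃ n, 0 < u n ∧ ∑ i ∈ Finset.range (n + 1), u i = t := by
  obtain ⟨N, hN, hmin⟩ : ∃ N, t ≤ ∑ i ∈ Finset.range N, u i ∧
      ∀ m < N, ∑ i ∈ Finset.range m, u i < t :=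
    ⟨Nat.find hle, Nat.find_spec hle, fun _ hm => not_le.1 (Nat.find_min hle hm)⟩
  obtain _ | n := N
  · exact absurd hN (by simpa only [Finset.range_zero, Finset.sum_empty, not_le] using ht)
  have hlt : ∑ i ∈ Finset.range n, u i < t := hmin n n.lt_succ_self
  have hn : 0 < u n := by
    refine (hu n).lt_of_ne' fun h => hlt.not_ge ?_
    simpa only [Finset.sum_range_succ, h, add_zero] using hN
  have hmem : ∑ i ∈ Finset.range n, u i ∈ zmultiples (u n) :=
    sum_mem fun m hm => huu n hn m (Finset.mem_range.1 hm)
  refine ⟨n, hn, le_antisymm ?_ hN⟩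
  rw [Finset.sum_range_succ]
  exact add_le_of_lt_of_mem_zmultiples hn hmem (hut n hn) hlt

end OrderedAddCommGroup

theorem zpow_mem_zmultiples_zpow {R : Type*} [DivisionRing R] {b : ℕ} (hb : (b : R) ≠ 0) {m n : ℤ}
    (hmn : m ≤ n) : (b : R) ^ n ∈ zmultiples ((b : R) ^ m) := by
  obtain ⟨d, rfl⟩ := Int.le.dest hmn
  refine mem_zmultiples_iff.2 ⟨(b : ℤ) ^ d, ?_⟩
  rw [add_comm, zpow_add₀ hb, zpow_natCast, zsmul_eq_mul, Int.cast_pow, Int.cast_natCast]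

section ZPowFloor

variable {K : Type*} [Field K] [LinearOrder K] [FloorSemiring K]

/-- The largest power of `b` with integer exponent that is at most `x`, taken to be `0` for `x ≤ 0`.
It is the rounded mass `2 ^ (-α x)` of the theorem, extended by `0` to points of no mass. -/
def zpowFloor (b : ℕ) (x : K) : K :=
  if 0 < x then (b : K) ^ Int.log b x else 0

variable {b : ℕ} {x y : K}

theorem zpowFloor_of_pos (hx : 0 < x) : zpowFloor b x = (b : K) ^ Int.log b x :=
  if_pos hx

theorem zpowFloor_of_nonpos (hx : x ≤ 0) : zpowFloor b x = 0 :=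
  if_neg hx.not_gt

variable [IsStrictOrderedRing K]

theorem isLeast_neg_log (hb : 1 < b) (hx : 0 < x) :
    IsLeast {n : ℤ | (b : K) ^ (-n) ≤ x} (-Int.log b x) := by
  simp only [Int.zpow_le_iff_le_log hb hx, neg_le (b := Int.log b x)]
  exact isLeast_Ici

theorem zpowFloor_nonneg : 0 ≤ zpowFloor b x := by
  unfold zpowFloor
  positivity

theorem zpowFloor_pos_iff (hb : b ≠ 0) : 0 < zpowFloor b x ↔ 0 < x := by
  refine ⟨fun h => not_le.1 fun hx => h.ne' (zpowFloor_of_nonpos hx), fun hx => ?_⟩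
  rw [zpowFloor_of_pos hx]
  exact zpow_pos (Nat.cast_pos.2 hb.pos) _

theorem lt_mul_zpowFloor (hb : 1 < b) (hx : 0 < x) : x < b * zpowFloor b x := by
  rw [zpowFloor_of_pos hx, mul_comm, ← zpow_add_one₀ (Nat.cast_ne_zero.2 (by lia))]
  exact Int.lt_zpow_succ_log_self hb x

theorem le_mul_zpowFloor (hb : 1 < b) (x : K) : x ≤ b * zpowFloor b x := by
  obtain hx | hx := le_or_gt x 0
  · rwa [zpowFloor_of_nonpos hx, mul_zero]
  · exact (lt_mul_zpowFloor hb hx).le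

theorem zpowFloor_mem_zmultiples (hb : b ≠ 0) (hx : 0 < x) (hxy : x ≤ y) :
    zpowFloor b y ∈ zmultiples (zpowFloor b x) := by
  rw [zpowFloor_of_pos hx, zpowFloor_of_pos (hx.trans_le hxy)]
  exact zpow_mem_zmultiples_zpow (Nat.cast_ne_zero.2 hb) (Int.log_mono_right hx hxy)

theorem zpow_mem_zmultiples_zpowFloor (hb : 1 < b) (hx : 0 < x) {k : ℤ}
    (hxk : x < (b : K) ^ (k + 1)) : (b : K) ^ k ∈ zmultiples (zpowFloor b x) := by
  rw [zpowFloor_of_pos hx]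
  exact zpow_mem_zmultiples_zpow (Nat.cast_ne_zero.2 (by lia))
    (Int.lt_add_one_iff.1 ((Int.lt_zpow_iff_log_lt hb hx).1 hxk))

end ZPowFloor

section Tsum

theorem tsum_succ_of_apply_zero {M : Type*} [AddCommMonoid M] [TopologicalSpace M] {f : ℕ → M}
    (hf : f 0 = 0) : ∑' n, f (n + 1) = ∑' n, f n := by
  refine Nat.succ_injective.tsum_eq fun n hn => ?_
  rw [Nat.range_succ]
  exact Nat.pos_of_ne_zero fun h => hn (h ▸ hf)

variable {b : ℕ} {p : ℕ → ℝ}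

theorem exists_le_sum_range_zpowFloor (hb : 1 < b) {t : ℝ} (ht : 0 < t)
    (hp : b * t ≤ ∑' i, p i) : ∃ N, t ≤ ∑ i ∈ Finset.range N, zpowFloor b (p i) := by
  have hb0 : (0 : ℝ) < b := Nat.cast_pos.2 (by lia)
  have hmass : 0 < ∑' i, p i := (mul_pos hb0 ht).trans_le hp
  have hsum : Summable p := by
    by_contra h
    exact hmass.ne' (tsum_eq_zero_of_not_summable h)
  obtain ⟨i, hi⟩ : ∃ i, 0 < p i := by
    by_contra! h
    exact hmass.not_ge (tsum_nonpos h)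
  by_contra! hlt
  have hfloor : Summable fun i => zpowFloor b (p i) :=
    summable_of_sum_range_le (fun _ => zpowFloor_nonneg) fun n => (hlt n).le
  refine hp.not_gt ?_
  calc ∑' i, p i
      < ∑' i, b * zpowFloor b (p i) :=
        hsum.tsum_lt_tsum (fun i => le_mul_zpowFloor hb (p i)) (lt_mul_zpowFloor hb hi)
          (hfloor.mul_left _)
    _ = b * ∑' i, zpowFloor b (p i) := tsum_mul_left
    _ ≤ b * t := by
        gcongr
        exact hfloor.tsum_le_of_sum_range_le fun n => (hlt n).le

theorem exists_sum_range_succ_zpowFloor_eq_zpow (hb : 1 < b) {k : ℤ} (hp : Antitone p)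
    (hp0 : p 0 < (b : ℝ) ^ (k + 1)) (hmass : (b : ℝ) ^ (k + 1) ≤ ∑' i, p i) :
    ∃ n, 0 < p n ∧ ∑ i ∈ Finset.range (n + 1), zpowFloor b (p i) = (b : ℝ) ^ k := by
  have hb0 : b ≠ 0 := by lia
  have ht : (0 : ℝ) < (b : ℝ) ^ k := zpow_pos (Nat.cast_pos.2 hb0.pos) k
  rw [zpow_add_one₀ (Nat.cast_ne_zero.2 hb0), mul_comm] at hmass
  simpa only [zpowFloor_pos_iff hb0] using
    exists_sum_range_succ_eq_of_mem_zmultiples ht (fun _ => zpowFloor_nonneg)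
      (fun n hn => zpow_mem_zmultiples_zpowFloor hb ((zpowFloor_pos_iff hb0).1 hn)
        ((hp n.zero_le).trans_lt hp0))
      (fun n hn m hmn => zpowFloor_mem_zmultiples hb0 ((zpowFloor_pos_iff hb0).1 hn) (hp hmn.le))
      (exists_le_sum_range_zpowFloor hb ht hmass)

end Tsum

theorem stmt10_general {b : ℕ} (hb : 1 < b) (k : ℤ) (p : ℕ → ℝ) (α : ℕ → ℤ)
    (hmono : ∀ x : ℕ, 1 ≤ x → p (x + 1) ≤ p x) (hp1 : p 1 < (b : ℝ) ^ (k + 1))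
    (hmass : (b : ℝ) ^ (k + 1) ≤ ∑' x, p (x + 1))
    (hα : ∀ x : ℕ, 1 ≤ x → 0 < p x → IsLeast {β : ℤ | (b : ℝ) ^ (-β) ≤ p x} (α x)) :
    ∃ x₀ : ℕ, 1 ≤ x₀ ∧ (∀ x : ℕ, 1 ≤ x → x ≤ x₀ → 0 < p x) ∧
      ∑ x ∈ Finset.Icc 1 x₀, (b : ℝ) ^ (-(α x)) = (b : ℝ) ^ k := by
  have hanti : Antitone fun x => p (x + 1) :=
    antitone_nat_of_succ_le fun x => hmono (x + 1) x.succ_pos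
  obtain ⟨n, hn, hsum⟩ := exists_sum_range_succ_zpowFloor_eq_zpow hb hanti hp1 hmass
  have hpos : ∀ x, 1 ≤ x → x ≤ n + 1 → 0 < p x := by
    rintro (_ | x) hx hxn
    · contradiction
    · exact hn.trans_le (hanti (Nat.le_of_succ_le_succ hxn))
  have hround : ∀ x ∈ Finset.Icc 1 (n + 1), (b : ℝ) ^ (-(α x)) = zpowFloor b (p x) := by
    intro x hx
    have hpx := hpos x (Finset.mem_Icc.1 hx).1 (Finset.mem_Icc.1 hx).2
    rw [(hα x (Finset.mem_Icc.1 hx).1 hpx).unique (isLeast_neg_log hb hpx), neg_neg,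
      zpowFloor_of_pos hpx]
  refine ⟨n + 1, n.succ_pos, hpos, ?_⟩
  rw [Finset.sum_congr rfl hround, ← hsum, Finset.range_eq_Ico,
    Finset.sum_Ico_add' (fun x => zpowFloor b (p x)), zero_add, Finset.Ico_add_one_right_eq_Icc]

/-- Let `p` be a probability mass function on the positive integers which is
nonincreasing (`p(1) ≥ p(2) ≥ ⋯`) with `p(1) < 1`. For each `x` with `p(x) > 0`, let
`α x` be the smallest integer with `2^{-α x} ≤ p(x)`. Then there is a positive integer
`x₀` with `p(x) > 0` for all `1 ≤ x ≤ x₀` and `∑_{x=1}^{x₀} 2^{-α x} = 1/2`. -/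
theorem stmt10 (p : ℕ → ℝ) (α : ℕ → ℤ)
    (hp0 : p 0 = 0) (hpnonneg : ∀ x, 0 ≤ p x) (hpsum : (∑' x, p x) = 1)
    (hmono : ∀ x : ℕ, 1 ≤ x → p (x + 1) ≤ p x) (hp1 : p 1 < 1)
    (hα : ∀ x : ℕ, 0 < p x →
      ((2 : ℝ) ^ (-(α x)) ≤ p x ∧ ∀ β : ℤ, (2 : ℝ) ^ (-β) ≤ p x → α x ≤ β)) :
    ∃ x₀ : ℕ, 1 ≤ x₀ ∧ (∀ x : ℕ, 1 ≤ x → x ≤ x₀ → 0 < p x) ∧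
      ∑ x ∈ Finset.Icc 1 x₀, (2 : ℝ) ^ (-(α x)) = 1 / 2 := by
  simpa using stmt10_general one_lt_two (-1) p α hmono (by simpa using hp1)
    (by simp [tsum_succ_of_apply_zero hp0, hpsum])
    fun x _ hx => by simpa [IsLeast, lowerBounds] using hα x hx
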